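/- For n ∈ ℤ, Q ∈ ℝ⁶ with |Q| > 0, and z ∈ ℂ with Im z > 0, with the integral interpreted as an improper Riemann integral: lim_{ε→0⁺} ∫₀^∞ e^{itz} exp((i|Q|² - ε)/(4t)) / (4πit)³ · t^{-n} dt = (i z^{1+n/2} / (2^{3-n} π³ |Q|^{n+2})) K_{n+2}(|Q|√(-z)), where K_ν is the modified Bessel function of the second kind and √(-z) is the principal branch. -/

import Mathlib

open MeasureTheory Filter

/-- The Macdonald function (modified Bessel function of the second kind),
`K_ν(w) = ∫₀^∞ e^{-w cosh u} cosh(ν u) du` (valid for `Re w > 0`). -/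
noncomputable def besselK (ν : ℂ) (w : ℂ) : ℂ :=
  ∫ u in Set.Ioi (0 : ℝ), Complex.exp (-w * Real.cosh u) * Complex.cosh (ν * u)

namespace BK

/-- the kernel in the exponential variable -/
noncomputable def f (μ a b : ℂ) (u : ℝ) : ℂ :=
  Complex.exp (-μ * u - a * Complex.exp (-(u : ℂ)) - b * Complex.exp (u : ℂ))

/-- the comparison function -/
noncomputable def g (k c : ℝ) (u : ℝ) : ℝ :=
  Real.exp (k * |u| - c * (Real.exp u + Real.exp (-u)))

lemma sq_le (u : ℝ) : u ^ 2 / 2 ≤ Real.exp u + Real.exp (-u) := by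
  rcases le_total 0 u with h | h
  · have := Real.quadratic_le_exp_of_nonneg h
    have := Real.exp_pos (-u)
    linarith
  · have h' : 0 ≤ -u := by linarith
    have := Real.quadratic_le_exp_of_nonneg h'
    have := Real.exp_pos u
    nlinarith

lemma g_cont (k c : ℝ) : Continuous (g k c) := by
  unfold g; fun_prop

lemma g_int (k c : ℝ) (hc : 0 < c) : Integrable (g k c) := by
  have h := (integrable_exp_neg_mul_sq (b := c / 4) (by positivity)).const_mul (Real.exp (k ^ 2 / c))
  refine h.mono' (g_cont k c).aestronglyMeasurable (Eventually.of_forall fun u => ?_)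
  rw [g, Real.norm_eq_abs, Real.abs_exp, ← Real.exp_add]
  apply Real.exp_le_exp.2
  have h1 := mul_le_mul_of_nonneg_left (sq_le u) hc.le
  have h2 : k * |u| ≤ k ^ 2 / c + c / 4 * u ^ 2 := by
    have : k ^ 2 / c + c / 4 * u ^ 2 - k * |u| = (k - c / 2 * |u|) ^ 2 / c := by
      rw [← sq_abs u]; field_simp; ring
    have h3 : 0 ≤ (k - c / 2 * |u|) ^ 2 / c := by positivity
    linarith
  linarith

lemma f_cont (μ a b : ℂ) : Continuous (f μ a b) := by
  unfold f; fun_prop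

lemma f_bound {μ a b : ℂ} {c : ℝ} (ha : c ≤ a.re) (hb : c ≤ b.re) (u : ℝ) :
    ‖f μ a b u‖ ≤ g ‖μ‖ c u := by
  rw [f, g, Complex.norm_exp]
  apply Real.exp_le_exp.2
  have e1 : Complex.exp (-(u : ℂ)) = ((Real.exp (-u) : ℝ) : ℂ) := by push_cast; rfl
  have e2 : Complex.exp (u : ℂ) = ((Real.exp u : ℝ) : ℂ) := by push_cast; rfl
  rw [e1, e2, Complex.sub_re, Complex.sub_re, Complex.re_mul_ofReal, Complex.re_mul_ofReal,
    Complex.re_mul_ofReal]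
  have h1 : (-μ).re * u ≤ ‖μ‖ * |u| := by
    calc (-μ).re * u ≤ |(-μ).re * u| := le_abs_self _
      _ = |(-μ).re| * |u| := abs_mul _ _
      _ ≤ ‖μ‖ * |u| := by
        gcongr
        rw [← norm_neg]; exact Complex.abs_re_le_norm _
  have h2 := mul_le_mul_of_nonneg_right ha (Real.exp_pos (-u)).le
  have h3 := mul_le_mul_of_nonneg_right hb (Real.exp_pos u).le
  linarith

lemma D_bound {μ a b : ℂ} {c M : ℝ} (ha : c ≤ a.re) (hb : c ≤ b.re)
    (haM : ‖a‖ ≤ M) (hbM : ‖b‖ ≤ M) (u : ℝ) :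
    ‖(-μ + a * Complex.exp (-(u : ℂ)) - b * Complex.exp (u : ℂ)) * f μ a b u‖ ≤
      (‖μ‖ + M + M) * g (‖μ‖ + 1) c u := by
  have hg : g (‖μ‖ + 1) c u = Real.exp |u| * g ‖μ‖ c u := by
    rw [g, g, ← Real.exp_add]; congr 1; ring
  have hM : 0 ≤ M := (norm_nonneg _).trans haM
  rw [norm_mul, hg, ← mul_assoc]
  have hf := f_bound (μ := μ) ha hb u
  refine mul_le_mul ?_ hf (norm_nonneg _) (by positivity)
  have n1 : ‖Complex.exp (-(u : ℂ))‖ ≤ Real.exp |u| := by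
    rw [Complex.norm_exp]; apply Real.exp_le_exp.2; simpa using neg_le_abs u
  have n2 : ‖Complex.exp (u : ℂ)‖ ≤ Real.exp |u| := by
    rw [Complex.norm_exp]; apply Real.exp_le_exp.2; simpa using le_abs_self u
  have n3 : 1 ≤ Real.exp |u| := Real.one_le_exp (abs_nonneg u)
  calc _ ≤ ‖-μ + a * Complex.exp (-(u : ℂ))‖ + ‖b * Complex.exp (u : ℂ)‖ := norm_sub_le _ _
    _ ≤ ‖-μ‖ + ‖a * Complex.exp (-(u : ℂ))‖ + ‖b * Complex.exp (u : ℂ)‖ := by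
        gcongr; exact norm_add_le _ _
    _ = ‖μ‖ * 1 + ‖a‖ * ‖Complex.exp (-(u : ℂ))‖ + ‖b‖ * ‖Complex.exp (u : ℂ)‖ := by
        rw [norm_neg, norm_mul, norm_mul, mul_one]
    _ ≤ ‖μ‖ * Real.exp |u| + M * Real.exp |u| + M * Real.exp |u| := by gcongr
    _ = _ := by ring

lemma f_int {μ a b : ℂ} (ha : 0 < a.re) (hb : 0 < b.re) : Integrable (f μ a b) := by
  have hc : 0 < min a.re b.re := lt_min ha hb
  exact (g_int ‖μ‖ _ hc).mono' (f_cont μ a b).aestronglyMeasurable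
    (Eventually.of_forall fun u => f_bound (min_le_left _ _) (min_le_right _ _) u)

lemma D_int {μ a b : ℂ} (ha : 0 < a.re) (hb : 0 < b.re) : Integrable (fun u : ℝ =>
    (-μ + a * Complex.exp (-(u : ℂ)) - b * Complex.exp (u : ℂ)) * f μ a b u) := by
  have hc : 0 < min a.re b.re := lt_min ha hb
  refine ((g_int (‖μ‖ + 1) _ hc).const_mul (‖μ‖ + max ‖a‖ ‖b‖ + max ‖a‖ ‖b‖)).mono' ?_
    (Eventually.of_forall fun u => D_bound (min_le_left _ _) (min_le_right _ _)
      (le_max_left _ _) (le_max_right _ _) u)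
  have := f_cont μ a b
  exact Continuous.aestronglyMeasurable (by fun_prop)

lemma D_zero {μ a b : ℂ} (ha : 0 < a.re) (hb : 0 < b.re) : ∫ u : ℝ,
    (-μ + a * Complex.exp (-(u : ℂ)) - b * Complex.exp (u : ℂ)) * f μ a b u = 0 := by
  refine integral_eq_zero_of_hasDerivAt_of_integrable (f := f μ a b) (fun u => ?_)
    (D_int ha hb) (f_int ha hb)
  have h0 : HasDerivAt (fun u : ℝ => (u : ℂ)) 1 u := Complex.ofRealCLM.hasDerivAt
  have h := (((h0.const_mul (-μ)).sub ((h0.neg.cexp).const_mul a)).sub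
    ((h0.cexp).const_mul b)).cexp
  refine h.congr_deriv ?_
  simp only [f, Pi.sub_apply, Pi.neg_apply]
  ring

/-- shifted integral -/
noncomputable def J (μ la lb ζ : ℂ) (s : ℝ) : ℂ :=
  ∫ u : ℝ, Complex.exp (-μ * (s * ζ)) *
    f μ (Complex.exp (la - s * ζ)) (Complex.exp (lb + s * ζ)) u

lemma J_deriv (μ la lb ζ : ℂ) (s₀ : ℝ) (ha : 0 < (Complex.exp (la - s₀ * ζ)).re)
    (hb : 0 < (Complex.exp (lb + s₀ * ζ)).re) : HasDerivAt (J μ la lb ζ) 0 s₀ := by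
  set A : ℝ → ℂ := fun s => Complex.exp (la - s * ζ) with hA
  set B : ℝ → ℂ := fun s => Complex.exp (lb + s * ζ) with hB
  set P : ℝ → ℂ := fun s => Complex.exp (-μ * (s * ζ)) with hP
  have cA : Continuous A := by rw [hA]; fun_prop
  have cB : Continuous B := by rw [hB]; fun_prop
  have cP : Continuous P := by rw [hP]; fun_prop
  change 0 < (A s₀).re at ha
  change 0 < (B s₀).re at hb
  set c := min (A s₀).re (B s₀).re / 2 with hcdef
  have hm : 0 < min (A s₀).re (B s₀).re := lt_min ha hb
  have hc : 0 < c := by positivity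
  have hcA : c < (A s₀).re := by
    have := min_le_left (A s₀).re (B s₀).re
    linarith
  have hcB : c < (B s₀).re := by
    have := min_le_right (A s₀).re (B s₀).re
    linarith
  set M := max ‖A s₀‖ ‖B s₀‖ + 1 with hMdef
  have hMA : ‖A s₀‖ < M := by have := le_max_left ‖A s₀‖ ‖B s₀‖; linarith
  have hMB : ‖B s₀‖ < M := by have := le_max_right ‖A s₀‖ ‖B s₀‖; linarith
  have ev : ∀ᶠ s in nhds s₀, c < (A s).re ∧ c < (B s).re ∧ ‖A s‖ < M ∧ ‖B s‖ < M ∧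
      ‖P s‖ < ‖P s₀‖ + 1 := by
    refine ((Complex.continuous_re.comp cA).continuousAt.eventually (lt_mem_nhds hcA)).and <|
      ((Complex.continuous_re.comp cB).continuousAt.eventually (lt_mem_nhds hcB)).and <|
      (cA.norm.continuousAt.eventually (gt_mem_nhds hMA)).and <|
      (cB.norm.continuousAt.eventually (gt_mem_nhds hMB)).and <|
      (cP.norm.continuousAt.eventually (gt_mem_nhds (lt_add_one _)))
  have key := hasDerivAt_integral_of_dominated_loc_of_deriv_le (μ := volume) (𝕜 := ℝ)
    (F := fun s u => P s * f μ (A s) (B s) u)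
    (F' := fun s u => (ζ * P s) *
      ((-μ + A s * Complex.exp (-(u : ℂ)) - B s * Complex.exp (u : ℂ)) * f μ (A s) (B s) u))
    (bound := fun u => (‖ζ‖ * (‖P s₀‖ + 1)) * ((‖μ‖ + M + M) * g (‖μ‖ + 1) c u))
    (x₀ := s₀) ev
    (Eventually.of_forall fun s => ((f_cont μ (A s) (B s)).const_mul _ ).aestronglyMeasurable)
    ((f_int ha hb).const_mul _)
    ((D_int ha hb).const_mul _).aestronglyMeasurable
    (Eventually.of_forall fun u s hs => ?_)
    (((g_int _ _ hc).const_mul _).const_mul _)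
    (Eventually.of_forall fun u s hs => ?_)
  · refine key.2.congr_deriv ?_
    rw [integral_const_mul, D_zero ha hb, mul_zero]
  · obtain ⟨h1, h2, h3, h4, h5⟩ := hs
    rw [norm_mul]
    refine mul_le_mul ?_ (D_bound h1.le h2.le h3.le h4.le u) (norm_nonneg _) (by positivity)
    rw [norm_mul]
    gcongr
  · have h0 : HasDerivAt (fun s : ℝ => (s : ℂ) * ζ) (1 * ζ) s :=
      (Complex.ofRealCLM.hasDerivAt (x := s)).mul_const ζ
    have h := ((h0.const_mul (-μ)).cexp).mul
      (((((h0.const_sub la).cexp.mul_const (Complex.exp (-(u : ℂ)))).const_sub (-μ * u)).sub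
      ((h0.const_add lb).cexp.mul_const (Complex.exp (u : ℂ)))).cexp)
    refine h.congr_deriv ?_
    simp only [hP, hA, hB, f, Pi.sub_apply]
    ring

lemma shift (μ la lb : ℂ) (hla : |la.im| < Real.pi / 2) (hlb : |lb.im| < Real.pi / 2) :
    ∫ u, f μ (Complex.exp la) (Complex.exp lb) u =
      Complex.exp (-μ * ((la - lb) / 2)) * ∫ u, f μ (Complex.exp ((la + lb) / 2))
        (Complex.exp ((la + lb) / 2)) u := by
  rw [abs_lt] at hla hlb
  have H : ∀ s ∈ Set.Icc (0 : ℝ) 1, HasDerivAt (J μ la lb ((la - lb) / 2)) 0 s := by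
    intro s hs
    have e : ((s : ℂ) * ((la - lb) / 2)).im = s * ((la.im - lb.im) / 2) := by
      rw [Complex.im_ofReal_mul]
      congr 1
      rw [show (la - lb) / 2 = (la - lb) / ((2 : ℝ) : ℂ) by norm_num, Complex.div_ofReal_im,
        Complex.sub_im]
    obtain ⟨h0, h1⟩ := hs
    apply J_deriv
    · rw [Complex.exp_re]
      refine mul_pos (Real.exp_pos _) (Real.cos_pos_of_mem_Ioo ⟨?_, ?_⟩) <;>
      rw [Complex.sub_im, e] <;> nlinarith
    · rw [Complex.exp_re]
      refine mul_pos (Real.exp_pos _) (Real.cos_pos_of_mem_Ioo ⟨?_, ?_⟩) <;>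
      rw [Complex.add_im, e] <;> nlinarith
  have h := constant_of_has_deriv_right_zero (a := 0) (b := 1)
    (fun s hs => (H s hs).continuousAt.continuousWithinAt)
    (fun s hs => (H s ⟨hs.1, hs.2.le⟩).hasDerivWithinAt) 1 (by simp)
  unfold J at h
  rw [integral_const_mul, integral_const_mul] at h
  simp only [Complex.ofReal_zero, Complex.ofReal_one, zero_mul, one_mul, mul_zero, sub_zero,
    add_zero, Complex.exp_zero] at h
  rw [← h]
  congr 4 <;> ring_nf

lemma f_bessel (μ w : ℂ) (hw : 0 < w.re) : ∫ u, f μ (w / 2) (w / 2) u = 2 * besselK μ w := by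
  have hw2 : 0 < (w / 2).re := by
    rw [show w / 2 = w / ((2 : ℝ) : ℂ) by norm_num, Complex.div_ofReal_re]; positivity
  have hi := f_int (μ := μ) hw2 hw2
  have hi' : Integrable (fun u : ℝ => f μ (w / 2) (w / 2) (-u)) := hi.comp_neg
  rw [← intervalIntegral.integral_Iic_add_Ioi (b := 0) hi.integrableOn hi.integrableOn]
  have := integral_comp_neg_Ioi 0 (f μ (w / 2) (w / 2))
  rw [neg_zero] at this
  rw [← this, ← integral_add hi'.integrableOn hi.integrableOn, besselK, ← integral_const_mul]
  congr 1
  ext u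
  have e : (2 : ℂ) * (Complex.exp (-w * Real.cosh u) * Complex.cosh (μ * u)) =
    Complex.exp (-w * Real.cosh u) * (Complex.exp (μ * u) + Complex.exp (-(μ * u))) := by
    rw [Complex.cosh]; ring
  rw [e, mul_add, ← Complex.exp_add, ← Complex.exp_add, f, f, Complex.ofReal_cosh, Complex.cosh]
  congr 2 <;> push_cast <;> ring_nf

lemma bessel_cont (μ w₀ : ℂ) (hw : 0 < w₀.re) : ContinuousAt (besselK μ) w₀ := by
  have main : ContinuousAt (fun w => ∫ u, f μ (w / 2) (w / 2) u) w₀ := by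
    refine continuousAt_of_dominated (bound := g ‖μ‖ (w₀.re / 4))
      (Eventually.of_forall fun w => (f_cont _ _ _).aestronglyMeasurable) ?_
      (g_int _ _ (by positivity)) (Eventually.of_forall fun u => ?_)
    · have : ∀ᶠ w : ℂ in nhds w₀, w₀.re / 2 < w.re :=
        Complex.continuous_re.continuousAt.eventually (lt_mem_nhds (by linarith))
      filter_upwards [this] with w h
      refine Eventually.of_forall fun u => ?_
      have hw2 : w₀.re / 4 ≤ (w / 2).re := by
        rw [show w / 2 = w / ((2 : ℝ) : ℂ) by norm_num, Complex.div_ofReal_re]; linarith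
      exact f_bound hw2 hw2 u
    · unfold f
      fun_prop
  have h2 : ContinuousAt (fun w => (1 / 2 : ℂ) * ∫ u, f μ (w / 2) (w / 2) u) w₀ :=
    main.const_mul _
  refine h2.congr ?_
  have : ∀ᶠ w : ℂ in nhds w₀, 0 < w.re :=
    Complex.continuous_re.continuousAt.eventually (lt_mem_nhds hw)
  filter_upwards [this] with w h
  rw [f_bessel μ w h]; ring

lemma main_id (μ a b : ℂ) (ha : 0 < a.re) (hb : 0 < b.re) :
    ∫ u, f μ a b u = 2 * Complex.exp (-μ * ((Complex.log a - Complex.log b) / 2)) *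
      besselK μ (2 * Complex.exp ((Complex.log a + Complex.log b) / 2)) := by
  have ha0 : a ≠ 0 := by rintro rfl; simp at ha
  have hb0 : b ≠ 0 := by rintro rfl; simp at hb
  have h1 : |(Complex.log a).im| < Real.pi / 2 := by
    rw [Complex.log_im]; exact Complex.abs_arg_lt_pi_div_two_iff.2 (Or.inl ha)
  have h2 : |(Complex.log b).im| < Real.pi / 2 := by
    rw [Complex.log_im]; exact Complex.abs_arg_lt_pi_div_two_iff.2 (Or.inl hb)
  have h := shift μ _ _ h1 h2
  rw [Complex.exp_log ha0, Complex.exp_log hb0] at h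
  rw [h]
  have hp : 0 < (2 * Complex.exp ((Complex.log a + Complex.log b) / 2)).re := by
    rw [show (2 : ℂ) = ((2 : ℝ) : ℂ) by norm_num, Complex.re_ofReal_mul, Complex.exp_re,
      Complex.div_ofReal_im, Complex.add_im]
    rw [abs_lt] at h1 h2
    refine mul_pos two_pos (mul_pos (Real.exp_pos _) (Real.cos_pos_of_mem_Ioo ⟨?_, ?_⟩)) <;>
      linarith
  have h3 := f_bessel μ _ hp
  rw [mul_div_cancel_left₀ _ (two_ne_zero' ℂ)] at h3
  rw [h3]; ring

lemma subst_exp (F : ℝ → ℂ) : ∫ t in Set.Ioi (0 : ℝ), F t =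
    ∫ u : ℝ, (Real.exp u : ℂ) * F (Real.exp u) := by
  have h := integral_image_eq_integral_abs_deriv_smul (s := Set.univ) (f := Real.exp)
    (f' := Real.exp) MeasurableSet.univ
    (fun x _ => (Real.hasDerivAt_exp x).hasDerivWithinAt) Real.exp_injective.injOn F
  rw [Set.image_univ, Real.range_exp, setIntegral_univ] at h
  rw [h]
  congr 1
  ext u
  rw [Real.abs_exp, Complex.real_smul]

lemma integrand (n : ℤ) (q z : ℂ) (ε : ℝ) :
    ∫ t in Set.Ioi (0 : ℝ),
          Complex.exp (Complex.I * t * z) *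
            Complex.exp ((Complex.I * q ^ 2 - (ε : ℂ)) / (4 * t)) /
              (4 * Real.pi * Complex.I * t) ^ 3 * (t : ℂ) ^ (-n) =
    Complex.I / (64 * Real.pi ^ 3) *
      ∫ u, f ((n : ℂ) + 2) ((ε - Complex.I * q ^ 2) / 4) (-Complex.I * z) u := by
  rw [subst_exp, ← integral_const_mul]
  congr 1
  ext u
  have e1 : ((Real.exp u : ℝ) : ℂ) ^ (-n) = Complex.exp (-n * u) := by
    rw [Complex.ofReal_exp, ← Complex.exp_int_mul]; push_cast; rfl
  have hpi : (Real.pi : ℂ) ≠ 0 := by exact_mod_cast Real.pi_ne_zero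
  have hE : Complex.exp (u : ℂ) ≠ 0 := Complex.exp_ne_zero _
  have e2 : f ((n : ℂ) + 2) ((ε - Complex.I * q ^ 2) / 4) (-Complex.I * z) u =
      Complex.exp (-n * u) * (Complex.exp u ^ 2)⁻¹ *
      Complex.exp ((Complex.I * q ^ 2 - (ε : ℂ)) / (4 * Complex.exp u)) *
      Complex.exp (Complex.I * Complex.exp u * z) := by
    rw [← Complex.exp_nat_mul, ← Complex.exp_neg, ← Complex.exp_add, ← Complex.exp_add,
      ← Complex.exp_add, f, Complex.exp_neg]
    congr 1
    push_cast
    field_simp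
    ring
  rw [e1, e2, Complex.ofReal_exp]
  have hI : Complex.I ^ 4 = 1 := Complex.I_pow_four
  field_simp
  rw [hI]
  ring

end BK

/-- For `n ∈ ℤ`, `Q ∈ ℝ⁶` with `|Q| > 0` and `Im z > 0`:
`lim_{ε→0⁺} ∫₀^∞ e^{itz} exp((i|Q|² - ε)/(4t)) / (4πit)³ · t^{-n} dt
  = (i z^{1+n/2} / (2^{3-n} π³ |Q|^{n+2})) K_{n+2}(|Q|√(-z))`,
with the principal branch of the complex power. -/
theorem improper_integral_eq_besselK (n : ℤ) (Q : EuclideanSpace ℝ (Fin 6))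
    (hQ : 0 < ‖Q‖) (z : ℂ) (hz : 0 < z.im) :
    Tendsto (fun ε : ℝ =>
        ∫ t in Set.Ioi (0 : ℝ),
          Complex.exp (Complex.I * t * z) *
            Complex.exp ((Complex.I * (‖Q‖ : ℂ) ^ 2 - (ε : ℂ)) / (4 * t)) /
              (4 * Real.pi * Complex.I * t) ^ 3 * (t : ℂ) ^ (-n))
      (nhdsWithin 0 (Set.Ioi 0))
      (nhds (Complex.I * z ^ ((1 : ℂ) + (n : ℂ) / 2) /
        ((2 : ℂ) ^ ((3 : ℤ) - n) * (Real.pi : ℂ) ^ 3 * (‖Q‖ : ℂ) ^ (n + 2)) *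
          besselK ((n : ℂ) + 2) ((‖Q‖ : ℂ) * (-z) ^ ((1 : ℂ) / 2)))) := by
  generalize ‖Q‖ = q at hQ ⊢
  have hz0 : z ≠ 0 := by rintro rfl; simp at hz
  have hq0 : (q : ℂ) ≠ 0 := by exact_mod_cast hQ.ne'
  have hpi := Real.pi_pos
  have hpi0 : (Real.pi : ℂ) ≠ 0 := by exact_mod_cast Real.pi_ne_zero
  set b : ℂ := -Complex.I * z with hb
  have hbre : 0 < b.re := by simp [hb, hz]
  set a : ℝ → ℂ := fun ε => (ε - Complex.I * (q : ℂ) ^ 2) / 4 with ha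
  have hare : ∀ ε : ℝ, (a ε).re = ε / 4 := by
    intro ε
    rw [ha]
    simp only
    rw [show (4 : ℂ) = ((4 : ℝ) : ℂ) by norm_num, Complex.div_ofReal_re]
    simp [← Complex.ofReal_pow]
  have haim : (a 0).im = - q ^ 2 / 4 := by
    rw [ha]
    simp only
    rw [show (4 : ℂ) = ((4 : ℝ) : ℂ) by norm_num, Complex.div_ofReal_im]
    simp [← Complex.ofReal_pow]
  -- logarithms
  have hlogz0 : 0 < (Complex.log z).im := by
    rw [Complex.log_im]
    exact lt_of_le_of_ne (Complex.arg_nonneg_iff.2 hz.le)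
      (fun h => by have := (Complex.arg_eq_zero_iff.1 h.symm).2; linarith)
  have hlogz1 : (Complex.log z).im < Real.pi := by
    rw [Complex.log_im]
    exact lt_of_le_of_ne (Complex.arg_le_pi z)
      (fun h => by have := (Complex.arg_eq_pi_iff.1 h).2; linarith)
  have hIexp : Complex.exp (-(Real.pi / 2 * Complex.I)) = -Complex.I := by
    rw [Complex.exp_neg, Complex.exp_pi_div_two_mul_I, Complex.inv_I]
  have him : (((Real.pi : ℂ) / 2) * Complex.I).im = Real.pi / 2 := by
    rw [show ((Real.pi : ℂ) / 2) = ((Real.pi / 2 : ℝ) : ℂ) by push_cast; rfl,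
      Complex.mul_I_im, Complex.ofReal_re]
  have hlb : Complex.log b = Complex.log z - Real.pi / 2 * Complex.I := by
    have : b = Complex.exp (Complex.log z - Real.pi / 2 * Complex.I) := by
      rw [sub_eq_add_neg, Complex.exp_add, hIexp, Complex.exp_log hz0, hb]; ring
    rw [this]
    apply Complex.log_exp <;> rw [Complex.sub_im, him] <;> linarith
  have hlnz : Complex.log (-z) = Complex.log z - Real.pi * Complex.I := by
    have : -z = Complex.exp (Complex.log z - Real.pi * Complex.I) := by
      rw [Complex.exp_sub, Complex.exp_pi_mul_I, Complex.exp_log hz0]; ring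
    rw [this]
    apply Complex.log_exp <;> simp only [Complex.sub_im, Complex.mul_I_im, Complex.ofReal_re] <;>
      linarith
  have hexpq : Complex.exp (Real.log q : ℂ) = q := by
    rw [← Complex.ofReal_exp, Real.exp_log hQ]
  have hexp2 : Complex.exp (Real.log 2 : ℂ) = 2 := by
    rw [← Complex.ofReal_exp, Real.exp_log two_pos]; norm_num
  have hla : Complex.log (a 0) = 2 * Real.log q - 2 * Real.log 2 - Real.pi / 2 * Complex.I := by
    have : a 0 = Complex.exp (2 * Real.log q - 2 * Real.log 2 - Real.pi / 2 * Complex.I) := by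
      rw [sub_eq_add_neg, Complex.exp_add, hIexp, Complex.exp_sub, two_mul, two_mul,
        Complex.exp_add, Complex.exp_add, hexpq, hexp2, ha]
      push_cast; ring
    have e : ((2 : ℂ) * Real.log q - 2 * Real.log 2).im = 0 := by
      rw [show (2 : ℂ) * Real.log q - 2 * Real.log 2 =
        ((2 * Real.log q - 2 * Real.log 2 : ℝ) : ℂ) by push_cast; rfl, Complex.ofReal_im]
    rw [this]
    apply Complex.log_exp <;> rw [Complex.sub_im, him, e] <;> linarith
  -- the two limit factors
  have ca : Tendsto a (nhdsWithin 0 (Set.Ioi 0)) (nhds (a 0)) := by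
    have : Continuous a := by rw [ha]; fun_prop
    exact this.continuousAt.tendsto.mono_left nhdsWithin_le_nhds
  have cl : Tendsto (fun ε => Complex.log (a ε)) (nhdsWithin 0 (Set.Ioi 0))
      (nhds (Complex.log (a 0))) := by
    refine ca.clog ?_
    right
    rw [haim]
    have : 0 < q ^ 2 := by positivity
    intro h; linarith
  have ew : 2 * Complex.exp ((Complex.log (a 0) + Complex.log b) / 2) =
      (q : ℂ) * (-z) ^ ((1 : ℂ) / 2) := by
    rw [Complex.cpow_def_of_ne_zero (neg_ne_zero.2 hz0), hlnz, hla, hlb,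
      show ((2 : ℂ) * Real.log q - 2 * Real.log 2 - Real.pi / 2 * Complex.I +
        (Complex.log z - Real.pi / 2 * Complex.I)) / 2 = Real.log q - Real.log 2 +
        (Complex.log z - Real.pi * Complex.I) * (1 / 2) by ring, Complex.exp_add, Complex.exp_sub,
        hexpq, hexp2]
    ring
  have hwre : 0 < (2 * Complex.exp ((Complex.log (a 0) + Complex.log b) / 2)).re := by
    rw [hla, hlb, show ((2 : ℂ) * Real.log q - 2 * Real.log 2 - Real.pi / 2 * Complex.I +
        (Complex.log z - Real.pi / 2 * Complex.I)) / 2 =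
        ((Real.log q - Real.log 2 : ℝ) : ℂ) + 
        (Complex.log z - Real.pi * Complex.I) / ((2 : ℝ) : ℂ) by push_cast; ring,
      show (2 : ℂ) = ((2 : ℝ) : ℂ) by norm_num, Complex.re_ofReal_mul, Complex.exp_re,
      Complex.add_im, Complex.div_ofReal_im, Complex.ofReal_im, Complex.sub_im, Complex.mul_I_im,
      Complex.ofReal_re]
    refine mul_pos two_pos (mul_pos (Real.exp_pos _) (Real.cos_pos_of_mem_Ioo ⟨?_, ?_⟩)) <;>
      linarith
  have cK : Tendsto (fun ε => besselK ((n : ℂ) + 2)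
      (2 * Complex.exp ((Complex.log (a ε) + Complex.log b) / 2))) (nhdsWithin 0 (Set.Ioi 0))
      (nhds (besselK ((n : ℂ) + 2)
        (2 * Complex.exp ((Complex.log (a 0) + Complex.log b) / 2)))) :=
    (BK.bessel_cont _ _ hwre).tendsto.comp
      ((((cl.add_const _).div_const _).cexp).const_mul _)
  have cE := (((cl.sub_const (Complex.log b)).div_const 2).const_mul (-((n : ℂ) + 2))).cexp
  have tot := ((cE.const_mul 2).mul cK).const_mul (Complex.I / (64 * Real.pi ^ 3))
  rw [ew] at tot
  have ee : Complex.exp (-((n : ℂ) + 2) * ((Complex.log (a 0) - Complex.log b) / 2)) =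
      z ^ ((1 : ℂ) + (n : ℂ) / 2) * (2 : ℂ) ^ (n + 2) / (q : ℂ) ^ (n + 2) := by
    have p1 : (q : ℂ) ^ (n + 2) = Complex.exp (((n + 2 : ℤ) : ℂ) * Real.log q) := by
      rw [Complex.exp_int_mul, hexpq]
    have p2 : (2 : ℂ) ^ (n + 2) = Complex.exp (((n + 2 : ℤ) : ℂ) * Real.log 2) := by
      rw [Complex.exp_int_mul, hexp2]
    rw [Complex.cpow_def_of_ne_zero hz0, hla, hlb, p1, p2, ← Complex.exp_add, ← Complex.exp_sub]
    congr 1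
    push_cast
    ring
  have fin : Complex.I / (64 * Real.pi ^ 3) * (2 * Complex.exp (-((n : ℂ) + 2) *
      ((Complex.log (a 0) - Complex.log b) / 2)) *
      besselK ((n : ℂ) + 2) ((q : ℂ) * (-z) ^ ((1 : ℂ) / 2))) =
      Complex.I * z ^ ((1 : ℂ) + (n : ℂ) / 2) /
        ((2 : ℂ) ^ ((3 : ℤ) - n) * (Real.pi : ℂ) ^ 3 * (q : ℂ) ^ (n + 2)) *
          besselK ((n : ℂ) + 2) ((q : ℂ) * (-z) ^ ((1 : ℂ) / 2)) := by
    have h2 : (2 : ℂ) ^ ((3 : ℤ) - n) = 8 / 2 ^ n := by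
      rw [zpow_sub₀ two_ne_zero]; norm_num
    have h3 : (2 : ℂ) ^ (n + 2) = 2 ^ n * 4 := by
      rw [zpow_add₀ two_ne_zero]; norm_num
    have hqn : (q : ℂ) ^ (n + 2) ≠ 0 := zpow_ne_zero _ hq0
    have h2n : (2 : ℂ) ^ n ≠ 0 := zpow_ne_zero _ two_ne_zero
    rw [ee, h2, h3]
    generalize (q : ℂ) ^ (n + 2) = x at *
    generalize (2 : ℂ) ^ n = y at *
    field_simp
    ring
  rw [fin] at tot
  refine tot.congr' ?_
  filter_upwards [self_mem_nhdsWithin] with ε hε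
  have hε : 0 < ε := hε
  rw [BK.integrand, BK.main_id _ _ _ (by rw [hare]; positivity) hbre]
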